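/- arXiv:1110.4886 — 2 statements merged into one kernel-verified Lean document; each statement's English description precedes it below -/
import Mathlib

section
/- Let L = ℤp₁ + ℤp₂ with p₁, p₂ linearly independent over ℝ, and let σ be the Weierstrass sigma-function of L. For every ξ₀ ∈ ℂ and j ∈ {1,2}, the function z ↦ (σ(z)/σ(z−ξ₀)) · (σ(z−ξ₀+p_j)/σ(z+p_j)) is constant, equal to e^{v_j} where v_j = −3ξ₀/p_j + ξ₀ p_j² ∑_{λ ∈ L \ {0,−p_j}} 1/(λ(λ+p_j)²). -/
open Complex Filter

noncomputable section

/-- The lattice generated by `p₁, p₂`. -/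
def lat (p₁ p₂ : ℂ) : Set ℂ := {z | ∃ m n : ℤ, z = (m : ℂ) * p₁ + (n : ℂ) * p₂}

/-- The Weierstrass sigma-function of the lattice generated by `p₁, p₂`. -/
def wsigma (p₁ p₂ : ℂ) (z : ℂ) : ℂ :=
  z * ∏' l : {l : ℂ // l ∈ lat p₁ p₂ ∧ l ≠ 0},
      Complex.exp (z / (l : ℂ) + z ^ 2 / (2 * (l : ℂ) ^ 2)) * (1 - z / (l : ℂ))

/-- The constant `v_j` associated to `ξ₀` and a period `pj`. -/
def vconst (p₁ p₂ ξ₀ pj : ℂ) : ℂ :=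
  -3 * ξ₀ / pj + ξ₀ * pj ^ 2 *
    ∑' l : {l : ℂ // l ∈ lat p₁ p₂ ∧ l ≠ 0 ∧ l ≠ -pj},
      1 / ((l : ℂ) * ((l : ℂ) + pj) ^ 2)

/-- The (half-open) fundamental parallelogram spanned by `p₁, p₂`. -/
def fpar (p₁ p₂ : ℂ) : Set ℂ :=
  {z | ∃ s t : ℝ, 0 ≤ s ∧ s < 1 ∧ 0 ≤ t ∧ t < 1 ∧ z = (s : ℂ) * p₁ + (t : ℂ) * p₂}

/-- The lattice `lat` as a Mathlib period pair: summability of inverse cubes. -/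
theorem summable_lat (p₁ p₂ : ℂ) (hind : LinearIndependent ℝ ![p₁, p₂]) :
    Summable fun l : {l : ℂ // l ∈ lat p₁ p₂} => ‖(l : ℂ)‖⁻¹ ^ 3 := by
  let L : PeriodPair := ⟨p₁, p₂, hind⟩
  have hfin : Module.finrank ℤ L.lattice = 2 := by
    rw [ZLattice.rank ℝ L.lattice]; exact Complex.finrank_real_complex
  have h := ZLattice.summable_norm_pow_inv (L := L.lattice) 3 (by rw [hfin]; norm_num)
  have hmem : ∀ l : ℂ, l ∈ lat p₁ p₂ → l ∈ L.lattice := by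
    rintro l ⟨m, n, h⟩
    exact PeriodPair.mem_lattice.mpr ⟨m, n, h.symm⟩
  exact h.comp_injective (i := fun l : {l : ℂ // l ∈ lat p₁ p₂} =>
    (⟨l.1, hmem l.1 l.2⟩ : L.lattice)) (fun a b hab => Subtype.ext (by simpa using hab))

theorem summable_lat_comp (p₁ p₂ : ℂ) (hind : LinearIndependent ℝ ![p₁, p₂])
    {ι : Type*} (i : ι → ℂ) (hi : Function.Injective i) (hl : ∀ x, i x ∈ lat p₁ p₂) :
    Summable fun x => ‖i x‖⁻¹ ^ 3 := by
  let j : ι → {l : ℂ // l ∈ lat p₁ p₂} := fun x => ⟨i x, hl x⟩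
  have hj : Function.Injective j := fun a b hab => hi (congrArg Subtype.val hab)
  have h := (summable_lat p₁ p₂ hind).comp_injective hj
  exact h

/-- One Weierstrass factor. -/
def wfac (z l : ℂ) : ℂ := Complex.exp (z / l + z ^ 2 / (2 * l ^ 2)) * (1 - z / l)

theorem efac_bound (u : ℂ) (hu : ‖u‖ ≤ 1 / 2) :
    ‖Complex.exp (u + u ^ 2 / 2) * (1 - u) - 1‖ ≤ 2 * ‖u‖ ^ 3 := by
  have h0 : (1 : ℂ) - u ≠ 0 := by
    intro h
    have : u = 1 := by linear_combination -h
    rw [this] at hu; norm_num at hu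
  have hb := Complex.norm_log_sub_logTaylor_le 2 (z := -u) (by rw [norm_neg]; linarith)
  have e1 : Complex.log (1 + -u) - Complex.logTaylor (2 + 1) (-u)
      = Complex.log (1 - u) + (u + u ^ 2 / 2) := by
    simp [Complex.logTaylor, Finset.sum_range_succ, sub_eq_add_neg]
    ring
  rw [e1, norm_neg] at hb
  have hn := norm_nonneg u
  have hinv : (1 - ‖u‖)⁻¹ ≤ 2 := by
    rw [inv_le_comm₀ (by linarith) (by norm_num)]; linarith
  have hb2 : ‖Complex.log (1 - u) + (u + u ^ 2 / 2)‖ ≤ ‖u‖ ^ 3 := by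
    refine hb.trans ?_
    have : ‖u‖ ^ (2 + 1) * (1 - ‖u‖)⁻¹ ≤ ‖u‖ ^ 3 * 2 := by gcongr
    have h3 : 0 ≤ ‖u‖ ^ 3 := by positivity
    norm_num at this ⊢
    linarith
  have h1 : ‖u‖ ^ 3 ≤ 1 := pow_le_one₀ hn (by linarith)
  have e2 : Complex.exp (u + u ^ 2 / 2) * (1 - u)
      = Complex.exp (Complex.log (1 - u) + (u + u ^ 2 / 2)) := by
    rw [Complex.exp_add (Complex.log (1 - u)), Complex.exp_log h0]; ring
  rw [e2]
  refine (Complex.norm_exp_sub_one_le (hb2.trans h1)).trans ?_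
  linarith

theorem wfac_multipliable (p₁ p₂ : ℂ) (hind : LinearIndependent ℝ ![p₁, p₂]) (z : ℂ)
    {ι : Type*} (i : ι → ℂ) (hi : Function.Injective i) (hl : ∀ x, i x ∈ lat p₁ p₂) :
    Multipliable fun x => wfac z (i x) := by
  have hs : Summable fun x => ‖i x‖⁻¹ ^ 3 :=
    summable_lat_comp p₁ p₂ hind i hi hl
  have hs2 : Summable fun x => ‖z / i x‖ ^ 3 := by
    refine (hs.mul_left (‖z‖ ^ 3)).congr fun x => ?_
    rw [norm_div, div_eq_mul_inv, mul_pow]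
  have key : Summable fun x => ‖wfac z (i x) - 1‖ := by
    refine Summable.of_norm_bounded_eventually (hs2.mul_left 2) ?_
    have := hs2.tendsto_cofinite_zero.eventually_le_const
      (show (0 : ℝ) < (1 / 2) ^ 3 by norm_num)
    filter_upwards [this] with x hx
    have hu : ‖z / i x‖ ≤ 1 / 2 := le_of_pow_le_pow_left₀ (by norm_num) (by norm_num) hx
    have := efac_bound _ hu
    rw [norm_norm]
    have e : wfac z (i x) =
        Complex.exp (z / i x + (z / i x) ^ 2 / 2) * (1 - z / i x) := by
      unfold wfac
      rw [div_pow, div_div, mul_comm (2 : ℂ)]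
    rw [e]
    exact this
  have := multipliable_one_add_of_summable key
  simpa using this

theorem wsigma_split (p₁ p₂ : ℂ) (hind : LinearIndependent ℝ ![p₁, p₂]) (z q : ℂ)
    (hq : q ∈ lat p₁ p₂) (hq0 : q ≠ 0) :
    wsigma p₁ p₂ z = z * (wfac z q *
      ∏' l : {l : ℂ // l ∈ lat p₁ p₂ ∧ l ≠ 0 ∧ l ≠ q}, wfac z l) := by
  have hU : {l : ℂ | l ∈ lat p₁ p₂ ∧ l ≠ 0}
      = {q} ∪ {l : ℂ | l ∈ lat p₁ p₂ ∧ l ≠ 0 ∧ l ≠ q} := by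
    ext l
    by_cases h : l = q
    · subst h; simp [hq, hq0]
    · simp [h]
      tauto
  have h1 := Multipliable.tprod_union_disjoint (f := wfac z)
    (s := {q}) (t := {l : ℂ | l ∈ lat p₁ p₂ ∧ l ≠ 0 ∧ l ≠ q})
    (by rw [Set.disjoint_singleton_left]; simp)
    (wfac_multipliable p₁ p₂ hind z _ Subtype.val_injective
      (fun x => by have := x.2; rw [Set.mem_singleton_iff] at this; rw [this]; exact hq))
    (wfac_multipliable p₁ p₂ hind z _ Subtype.val_injective (fun x => x.2.1))
  rw [← hU, tprod_singleton] at h1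
  unfold wsigma
  congr 1

theorem lat_neg {p₁ p₂ l : ℂ} (h : l ∈ lat p₁ p₂) : -l ∈ lat p₁ p₂ := by
  obtain ⟨m, n, rfl⟩ := h
  exact ⟨-m, -n, by push_cast; ring⟩

theorem lat_add {p₁ p₂ l k : ℂ} (h : l ∈ lat p₁ p₂) (h' : k ∈ lat p₁ p₂) :
    l + k ∈ lat p₁ p₂ := by
  obtain ⟨m, n, rfl⟩ := h
  obtain ⟨m', n', rfl⟩ := h'
  exact ⟨m + m', n + n', by push_cast; ring⟩

/-- Translation by `p`. -/
def shiftE (p₁ p₂ p : ℂ) (hp : p ∈ lat p₁ p₂) :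
    {l : ℂ // l ∈ lat p₁ p₂ ∧ l ≠ 0 ∧ l ≠ -p} ≃ {l : ℂ // l ∈ lat p₁ p₂ ∧ l ≠ 0 ∧ l ≠ p} where
  toFun l := ⟨l.1 + p, lat_add l.2.1 hp, fun h => l.2.2.2 (by linear_combination h),
    fun h => l.2.2.1 (by linear_combination h)⟩
  invFun l := ⟨l.1 + -p, lat_add l.2.1 (lat_neg hp), fun h => l.2.2.2 (by linear_combination h),
    fun h => l.2.2.1 (by linear_combination h)⟩
  left_inv l := Subtype.ext (by simp)
  right_inv l := Subtype.ext (by simp)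

/-- The reflection `l ↦ -p - l`. -/
def reflE (p₁ p₂ p : ℂ) (hp : p ∈ lat p₁ p₂) :
    {l : ℂ // l ∈ lat p₁ p₂ ∧ l ≠ 0 ∧ l ≠ -p} ≃ {l : ℂ // l ∈ lat p₁ p₂ ∧ l ≠ 0 ∧ l ≠ -p} where
  toFun l := ⟨-l.1 + -p, lat_add (lat_neg l.2.1) (lat_neg hp),
    fun h => l.2.2.2 (by linear_combination -h), fun h => l.2.2.1 (by linear_combination -h)⟩
  invFun l := ⟨-l.1 + -p, lat_add (lat_neg l.2.1) (lat_neg hp),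
    fun h => l.2.2.2 (by linear_combination -h), fun h => l.2.2.1 (by linear_combination -h)⟩
  left_inv l := Subtype.ext (by simp)
  right_inv l := Subtype.ext (by simp)

theorem young_aux (a b : ℝ) (ha : 0 ≤ a) (hb : 0 ≤ b) : a * b ^ 2 ≤ a ^ 3 + b ^ 3 := by
  have ha3 := pow_nonneg ha 3
  have hb3 := pow_nonneg hb 3
  rcases le_total a b with h | h
  · have : a * b ^ 2 ≤ b * b ^ 2 := by gcongr
    linarith [pow_succ' b 2]
  · have : a * b ^ 2 ≤ a * a ^ 2 := by gcongr
    linarith [pow_succ' a 2]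

theorem norm_A_le (l p : ℂ) :
    ‖1 / (l * (l + p) ^ 2)‖ ≤ ‖l‖⁻¹ ^ 3 + ‖l + p‖⁻¹ ^ 3 := by
  rw [norm_div, norm_mul, norm_pow, norm_one, one_div, mul_inv, ← inv_pow]
  exact young_aux _ _ (inv_nonneg.mpr (norm_nonneg _)) (inv_nonneg.mpr (norm_nonneg _))

theorem summable_A_comp (p₁ p₂ : ℂ) (hind : LinearIndependent ℝ ![p₁, p₂]) (p : ℂ)
    (hp : p ∈ lat p₁ p₂)
    {ι : Type*} (i : ι → ℂ) (hi : Function.Injective i) (hl : ∀ x, i x ∈ lat p₁ p₂) :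
    Summable fun x => 1 / (i x * (i x + p) ^ 2) := by
  have h1 := summable_lat_comp p₁ p₂ hind i hi hl
  have h2 := summable_lat_comp p₁ p₂ hind (fun x => i x + p)
    (fun a b hab => hi (add_right_cancel hab)) (fun x => lat_add (hl x) hp)
  exact Summable.of_norm_bounded (h1.add h2) fun x => norm_A_le (i x) p

theorem summable_A (p₁ p₂ : ℂ) (hind : LinearIndependent ℝ ![p₁, p₂]) (p : ℂ)
    (hp : p ∈ lat p₁ p₂) :
    Summable fun l : {l : ℂ // l ∈ lat p₁ p₂ ∧ l ≠ 0 ∧ l ≠ -p} =>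
      1 / ((l : ℂ) * ((l : ℂ) + p) ^ 2) :=
  summable_A_comp p₁ p₂ hind p hp _ Subtype.val_injective (fun x => x.2.1)

theorem hasSum_d (p₁ p₂ : ℂ) (hind : LinearIndependent ℝ ![p₁, p₂]) (p : ℂ)
    (hp : p ∈ lat p₁ p₂) (ξ s : ℂ) :
    HasSum (fun l : {l : ℂ // l ∈ lat p₁ p₂ ∧ l ≠ 0 ∧ l ≠ -p} =>
      ξ * p ^ 2 * (1 / ((l : ℂ) * ((l : ℂ) + p) ^ 2)) +
        s * (1 / ((l : ℂ) * ((l : ℂ) + p) ^ 2) + 1 / ((l : ℂ) ^ 2 * ((l : ℂ) + p))))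
      (ξ * p ^ 2 * ∑' l : {l : ℂ // l ∈ lat p₁ p₂ ∧ l ≠ 0 ∧ l ≠ -p},
        1 / ((l : ℂ) * ((l : ℂ) + p) ^ 2)) := by
  have hA := (summable_A p₁ p₂ hind p hp).hasSum
  have hA' := ((reflE p₁ p₂ p hp).hasSum_iff.mpr hA).neg
  have h := (hA.mul_left (ξ * p ^ 2)).add ((hA.add hA').mul_left s)
  rw [add_neg_cancel, mul_zero, add_zero] at h
  refine h.congr_fun fun l => ?_
  have h1 : (l : ℂ) ≠ 0 := l.2.2.1
  have h2 : (l : ℂ) + p ≠ 0 := fun h => l.2.2.2 (by linear_combination h)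
  have e : -(1 / ((-(l : ℂ) + -p) * ((-(l : ℂ) + -p) + p) ^ 2))
      = 1 / ((l : ℂ) ^ 2 * ((l : ℂ) + p)) := by
    have : (-(l : ℂ) + -p) * ((-(l : ℂ) + -p) + p) ^ 2 = -((l : ℂ) ^ 2 * ((l : ℂ) + p)) := by ring
    rw [this, one_div, one_div, inv_neg, neg_neg]
  rw [← e]
  rfl

theorem term_id (z w p l : ℂ) (hl : l ≠ 0) (hlp : l + p ≠ 0) :
    wfac z l * wfac (w + p) (l + p) = wfac w l * wfac (z + p) (l + p) *
      Complex.exp ((z - w) * p ^ 2 * (1 / (l * (l + p) ^ 2)) +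
        ((z - w) * (z + w) * p / 2) * (1 / (l * (l + p) ^ 2) + 1 / (l ^ 2 * (l + p)))) := by
  have e1 : ∀ z : ℂ, 1 - (z + p) / (l + p) = (1 - z / l) * (l / (l + p)) := by
    intro z; field_simp; ring
  unfold wfac
  rw [e1, e1]
  have e2 : Complex.exp (z / l + z ^ 2 / (2 * l ^ 2)) *
      Complex.exp ((w + p) / (l + p) + (w + p) ^ 2 / (2 * (l + p) ^ 2)) =
      Complex.exp (w / l + w ^ 2 / (2 * l ^ 2)) *
      Complex.exp ((z + p) / (l + p) + (z + p) ^ 2 / (2 * (l + p) ^ 2)) *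
      Complex.exp ((z - w) * p ^ 2 * (1 / (l * (l + p) ^ 2)) +
        ((z - w) * (z + w) * p / 2) * (1 / (l * (l + p) ^ 2) + 1 / (l ^ 2 * (l + p)))) := by
    rw [← Complex.exp_add, ← Complex.exp_add, ← Complex.exp_add]
    congr 1
    field_simp
    ring
  linear_combination ((1 - z / l) * (l / (l + p)) * (1 - w / l)) * e2

theorem boundary_id (z w p : ℂ) (hp : p ≠ 0) :
    (z * wfac z (-p)) * ((w + p) * wfac (w + p) p) =
      Complex.exp (-3 * (z - w) / p) * ((w * wfac w (-p)) * ((z + p) * wfac (z + p) p)) := by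
  unfold wfac
  have e2 : Complex.exp (z / -p + z ^ 2 / (2 * (-p) ^ 2)) *
      Complex.exp ((w + p) / p + (w + p) ^ 2 / (2 * p ^ 2)) =
      Complex.exp (-3 * (z - w) / p) * (Complex.exp (w / -p + w ^ 2 / (2 * (-p) ^ 2)) *
      Complex.exp ((z + p) / p + (z + p) ^ 2 / (2 * p ^ 2))) := by
    rw [← Complex.exp_add, ← Complex.exp_add, ← Complex.exp_add]
    congr 1
    field_simp
    ring
  have e3 : z * (1 - z / -p) * ((w + p) * (1 - (w + p) / p)) =
      w * (1 - w / -p) * ((z + p) * (1 - (z + p) / p)) := by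
    field_simp
    ring
  generalize Complex.exp (z / -p + z ^ 2 / (2 * (-p) ^ 2)) = a at *
  generalize Complex.exp ((w + p) / p + (w + p) ^ 2 / (2 * p ^ 2)) = b at *
  linear_combination (z * (1 - z / -p) * ((w + p) * (1 - (w + p) / p))) * e2 +
    (Complex.exp (-3 * (z - w) / p) * (Complex.exp (w / -p + w ^ 2 / (2 * (-p) ^ 2)) *
      Complex.exp ((z + p) / p + (z + p) ^ 2 / (2 * p ^ 2)))) * e3

theorem cross_id (p₁ p₂ : ℂ) (hind : LinearIndependent ℝ ![p₁, p₂]) (p : ℂ)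
    (hp : p ∈ lat p₁ p₂) (hp0 : p ≠ 0) (z w : ℂ) :
    wsigma p₁ p₂ z * wsigma p₁ p₂ (w + p) =
      Complex.exp (vconst p₁ p₂ (z - w) p) * (wsigma p₁ p₂ w * wsigma p₁ p₂ (z + p)) := by
  have M := fun z : ℂ => wfac_multipliable p₁ p₂ hind z
    (fun l : {l : ℂ // l ∈ lat p₁ p₂ ∧ l ≠ 0 ∧ l ≠ -p} => (l : ℂ))
    Subtype.val_injective (fun x => x.2.1)
  have M' := fun z : ℂ => wfac_multipliable p₁ p₂ hind z
    (fun l : {l : ℂ // l ∈ lat p₁ p₂ ∧ l ≠ 0 ∧ l ≠ -p} => (l : ℂ) + p)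
    (fun a b hab => Subtype.ext (by simpa using hab)) (fun x => lat_add x.2.1 hp)
  have R : ∀ z : ℂ, ∏' l : {l : ℂ // l ∈ lat p₁ p₂ ∧ l ≠ 0 ∧ l ≠ p}, wfac z l =
      ∏' l : {l : ℂ // l ∈ lat p₁ p₂ ∧ l ≠ 0 ∧ l ≠ -p}, wfac z ((l : ℂ) + p) := fun z =>
    ((shiftE p₁ p₂ p hp).tprod_eq (fun l => wfac z l)).symm
  have hd := hasSum_d p₁ p₂ hind p hp (z - w) ((z - w) * (z + w) * p / 2)
  have hE : HasProd (fun l : {l : ℂ // l ∈ lat p₁ p₂ ∧ l ≠ 0 ∧ l ≠ -p} => Complex.exp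
      ((z - w) * p ^ 2 * (1 / ((l : ℂ) * ((l : ℂ) + p) ^ 2)) + ((z - w) * (z + w) * p / 2) *
        (1 / ((l : ℂ) * ((l : ℂ) + p) ^ 2) + 1 / ((l : ℂ) ^ 2 * ((l : ℂ) + p))))) _ := hd.cexp
  have h1 := ((M z).hasProd.mul (M' (w + p)).hasProd)
  have h2 := ((M w).hasProd.mul (M' (z + p)).hasProd).mul hE
  have key := h1.unique (h2.congr_fun fun l => term_id z w p l l.2.2.1
    (fun h => l.2.2.2 (by linear_combination h)))
  rw [wsigma_split p₁ p₂ hind z (-p) (lat_neg hp) (neg_ne_zero.mpr hp0),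
    wsigma_split p₁ p₂ hind w (-p) (lat_neg hp) (neg_ne_zero.mpr hp0),
    wsigma_split p₁ p₂ hind (w + p) p hp hp0, wsigma_split p₁ p₂ hind (z + p) p hp hp0, R, R]
  have hb := boundary_id z w p hp0
  unfold vconst
  rw [Complex.exp_add]
  linear_combination (z * wfac z (-p)) * ((w + p) * wfac (w + p) p) * key +
    (∏' l : {l : ℂ // l ∈ lat p₁ p₂ ∧ l ≠ 0 ∧ l ≠ -p}, wfac w l) *
    (∏' l : {l : ℂ // l ∈ lat p₁ p₂ ∧ l ≠ 0 ∧ l ≠ -p}, wfac (z + p) ((l : ℂ) + p)) *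
    Complex.exp ((z - w) * p ^ 2 * ∑' l : {l : ℂ // l ∈ lat p₁ p₂ ∧ l ≠ 0 ∧ l ≠ -p},
        1 / ((l : ℂ) * ((l : ℂ) + p) ^ 2)) * hb

/-- For every `ξ₀ ∈ ℂ` and `pj ∈ {p₁, p₂}`, the function
`z ↦ (σ(z)/σ(z−ξ₀)) · (σ(z−ξ₀+pj)/σ(z+pj))` is constantly equal to `e^{v_j}`,
wherever the denominators are nonzero. -/
theorem sigma_quotient_eq_exp_v (p₁ p₂ : ℂ)
    (hind : LinearIndependent ℝ ![p₁, p₂]) (ξ₀ : ℂ)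
    (pj : ℂ) (hpj : pj = p₁ ∨ pj = p₂) :
    ∀ z : ℂ, wsigma p₁ p₂ (z - ξ₀) ≠ 0 → wsigma p₁ p₂ (z + pj) ≠ 0 →
      (wsigma p₁ p₂ z / wsigma p₁ p₂ (z - ξ₀)) *
        (wsigma p₁ p₂ (z - ξ₀ + pj) / wsigma p₁ p₂ (z + pj)) =
      Complex.exp (vconst p₁ p₂ ξ₀ pj) := by
  intro z h1 h2
  have hp : pj ∈ lat p₁ p₂ := by
    rcases hpj with rfl | rfl
    · exact ⟨1, 0, by simp⟩
    · exact ⟨0, 1, by simp⟩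
  have hp0 : pj ≠ 0 := by
    rcases hpj with rfl | rfl
    · simpa using hind.ne_zero 0
    · simpa using hind.ne_zero 1
  have h := cross_id p₁ p₂ hind pj hp hp0 z (z - ξ₀)
  rw [sub_sub_cancel] at h
  rw [div_mul_div_comm, h, mul_div_cancel_right₀ _ (mul_ne_zero h1 h2)]
end
end

section
/- Let L = ℤp₁ + ℤp₂ be a lattice with ω = p₂/p₁ ∉ ℝ, σ its Weierstrass sigma-function, ξ₀, a ∈ ℂ and g elliptic with periods p₁, p₂ and g not identically zero. Suppose Im(a p_j) = Im(v_j) + 2 m_j π for some m_j ∈ ℤ, j = 1,2, where v_j = −3ξ₀/p_j + ξ₀ p_j² ∑_{λ ∈ L \ {0,−p_j}} 1/(λ(λ+p_j)²). Then the function f(z) = e^{az} g(z) σ(z)/σ(z − ξ₀) satisfies f(z + p_j) = e^{α_j} f(z) with α_j = a p_j − v_j − 2 m_j π i ∈ ℝ, and hence its phase f/|f| is doubly periodic with periods p₁, p₂. -/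
open Complex Filter

noncomputable section

/-- The Weierstrass elementary factor of genus two. -/
def wE (u : ℂ) : ℂ := Complex.exp (u + u ^ 2 / 2) * (1 - u)

lemma wE_isBigO : (fun u : ℂ => wE u - 1) =O[nhds 0] (fun u : ℂ => u ^ 3) := by
  have h1 := Complex.exp_sub_sum_range_isBigO_pow 3
  have ht : Tendsto (fun u : ℂ => u + u ^ 2 / 2) (nhds 0) (nhds 0) := by
    have : Continuous (fun u : ℂ => u + u ^ 2 / 2) := by fun_prop
    simpa using this.tendsto 0
  have h2 := h1.comp_tendsto ht
  have hb : ∀ q : ℂ → ℂ, Continuous q → q =O[nhds 0] (fun _ : ℂ => (1 : ℂ)) := by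
    intro q hq
    exact (hq.tendsto 0).isBigO_one ℂ
  have h3 : (fun u : ℂ => (u + u ^ 2 / 2) ^ 3) =O[nhds 0] (fun u : ℂ => u ^ 3) := by
    have := (Asymptotics.isBigO_refl (fun u : ℂ => u ^ 3) (nhds 0)).mul
      (hb (fun u => (1 + u / 2) ^ 3) (by fun_prop))
    simp only [mul_one] at this
    refine this.congr_left ?_
    intro u; ring
  have h4 := ((h2.trans h3).mul (hb (fun u => 1 - u) (by fun_prop)))
  have h5 := (Asymptotics.isBigO_refl (fun u : ℂ => u ^ 3) (nhds 0)).mul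
      (hb (fun u => - (1 / 2) - 3 / 8 * u - u ^ 2 / 8) (by fun_prop))
  simp only [mul_one] at h4 h5
  refine (h4.add h5).congr_left ?_
  intro u
  simp only [wE, Function.comp, Finset.sum_range_succ, Finset.sum_range_zero, Nat.factorial]
  push_cast
  ring

lemma summable_inv_cube (L : PeriodPair) (x : ℂ) :
    Summable fun l : L.lattice => ‖(l : ℂ) - x‖⁻¹ ^ 3 := by
  exact ZLattice.summable_norm_sub_inv_pow L.lattice 3 (by simp) x

lemma summable_wE (L : PeriodPair) (z : ℂ) :
    Summable fun l : L.lattice => (wE (z / l) - 1) := by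
  have h0 := (summable_inv_cube L 0).mul_left (‖z‖ ^ 3)
  have hs : Summable fun l : L.lattice => ‖(z / (l : ℂ)) ^ 3‖ := by
    refine h0.congr ?_
    intro l; simp [div_eq_mul_inv, mul_pow]
  have ht : Tendsto (fun l : L.lattice => z / (l : ℂ)) cofinite (nhds 0) := by
    rw [tendsto_zero_iff_norm_tendsto_zero]
    have h1 := hs.tendsto_cofinite_zero
    have h2 := h1.rpow_const (p := (1 / 3 : ℝ)) (Or.inr (by norm_num))
    rw [Real.zero_rpow (by norm_num)] at h2
    refine h2.congr ?_
    intro l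
    rw [norm_pow, ← Real.rpow_natCast, ← Real.rpow_mul (norm_nonneg _)]
    norm_num
  exact summable_of_isBigO hs ((wE_isBigO.comp_tendsto ht).norm_right)

lemma wsigma_eq (L : PeriodPair) (z : ℂ) :
    wsigma L.ω₁ L.ω₂ z = z * ∏' l : L.lattice, wE (z / l) := by
  unfold wsigma
  congr 1
  have e1 := tprod_subtype {l : ℂ | l ∈ lat L.ω₁ L.ω₂ ∧ l ≠ 0} (fun l => wE (z / l))
  have e2 := tprod_subtype (L.lattice : Set ℂ) (fun l => wE (z / l))
  have e3 : ∀ l : ℂ, Complex.exp (z / l + z ^ 2 / (2 * l ^ 2)) * (1 - z / l) = wE (z / l) := by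
    intro l
    unfold wE
    congr 3
    rw [div_pow, div_div, mul_comm]
  simp_rw [e3]
  refine e1.trans (Eq.trans ?_ e2.symm)
  congr 1
  ext l
  by_cases h : l = 0
  · subst h
    simp [Set.mulIndicator, wE]
  · have : l ∈ {l : ℂ | l ∈ lat L.ω₁ L.ω₂ ∧ l ≠ 0} ↔ l ∈ (L.lattice : Set ℂ) := by
      simp only [Set.mem_ofPred_eq, SetLike.mem_coe, PeriodPair.mem_lattice, lat, h, ne_eq,
        not_false_eq_true, and_true, eq_comm]
    by_cases hl : l ∈ (L.lattice : Set ℂ)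
    · rw [Set.mulIndicator_of_mem hl, Set.mulIndicator_of_mem (this.mpr hl)]
    · rw [Set.mulIndicator_of_notMem hl, Set.mulIndicator_of_notMem (fun h => hl (this.mp h))]

lemma multipliable_of_sub_one {ι : Type*} {f : ι → ℂ} (h : Summable fun i => f i - 1) :
    Multipliable f := by
  have := multipliable_one_add_of_summable h.norm
  simpa using this

/-- The factor of sigma attached to a lattice point. -/
def wF (z l : ℂ) : ℂ := (if l = 0 then z else 1) * wE (z / l)

lemma wF_hasProd (L : PeriodPair) (z : ℂ) :
    HasProd (fun l : L.lattice => wF z l) (wsigma L.ω₁ L.ω₂ z) := by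
  rw [wsigma_eq]
  unfold wF
  refine HasProd.mul ?_ (multipliable_of_sub_one (summable_wE L z)).hasProd
  have := hasProd_ite_eq (0 : L.lattice) z
  convert this using 2 with l
  simp

/-- Linear coefficient. -/
def wA (p l : ℂ) : ℂ := 1 / (l + p) - 1 / l + p / (l + p) ^ 2
/-- Quadratic coefficient. -/
def wB (p l : ℂ) : ℂ := (1 / (l + p) ^ 2 - 1 / l ^ 2) / 2
/-- Constant factor. -/
def wG (p l : ℂ) : ℂ :=
  if l = 0 then -Complex.exp (3 / 2) / p else if l = -p then p else wE (p / (l + p))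

lemma wF_shift (p z l : ℂ) (hp : p ≠ 0) :
    wF (z + p) (l + p) = wF z l * (Complex.exp (wA p l * z + wB p l * z ^ 2) * wG p l) := by
  by_cases h0 : l = 0
  · subst h0
    have : wA p 0 * z + wB p 0 * z ^ 2 + 3 / 2 = (z + p) / p + ((z + p) / p) ^ 2 / 2 := by
      simp only [wA, wB, zero_add, div_zero, ne_eq, OfNat.ofNat_ne_zero, not_false_eq_true, zero_pow]
      field_simp
      ring
    simp only [wF, wG, wE, zero_add, if_true, hp, if_false, ← this]
    rw [Complex.exp_add _ (3 / 2)]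
    simp
    field_simp
    ring
  by_cases h1 : l = -p
  · subst h1
    have : wA p (-p) * z + wB p (-p) * z ^ 2 = - (z / (-p) + (z / (-p)) ^ 2 / 2) := by
      simp only [wA, wB, neg_add_cancel]
      field_simp
      simp
      ring
    simp only [wF, wG, wE, h0, if_true, if_false, this, neg_add_cancel]
    rw [Complex.exp_neg]
    have := Complex.exp_ne_zero (z / (-p) + (z / (-p)) ^ 2 / 2)
    field_simp
    simp
    ring
  have h2 : l + p ≠ 0 := fun h => h1 (eq_neg_of_add_eq_zero_left h)
  have : (z + p) / (l + p) + ((z + p) / (l + p)) ^ 2 / 2 =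
      (z / l + (z / l) ^ 2 / 2) + (wA p l * z + wB p l * z ^ 2)
      + (p / (l + p) + (p / (l + p)) ^ 2 / 2) := by
    simp only [wA, wB]; field_simp; ring
  simp only [wF, wG, wE, h0, h1, h2, if_false, this, Complex.exp_add]
  field_simp
  ring

lemma wG_ne_zero (p l : ℂ) (hp : p ≠ 0) : wG p l ≠ 0 := by
  unfold wG
  split_ifs with h0 h1
  · exact div_ne_zero (neg_ne_zero.mpr (Complex.exp_ne_zero _)) hp
  · exact hp
  · have h2 : l + p ≠ 0 := fun h => h1 (eq_neg_of_add_eq_zero_left h)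
    refine mul_ne_zero (Complex.exp_ne_zero _) ?_
    have : 1 - p / (l + p) = l / (l + p) := by field_simp; ring
    rw [this]
    exact div_ne_zero h0 h2

lemma cofinite_ne (L : PeriodPair) (x : ℂ) : ∀ᶠ l : L.lattice in cofinite, (l : ℂ) ≠ x := by
  rw [eventually_cofinite]
  simp only [ne_eq, not_not]
  refine Set.Subsingleton.finite ?_
  intro a ha b hb
  exact Subtype.ext (ha.trans hb.symm)

lemma wG_hasProd (L : PeriodPair) (p : L.lattice) (hp : (p : ℂ) ≠ 0) :
    ∃ c : ℂ, c ≠ 0 ∧ HasProd (fun l : L.lattice => wG p l) c := by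
  have h1 : Summable fun l : L.lattice => wE ((p : ℂ) / ((l : ℂ) + p)) - 1 := by
    have := (Equiv.addRight p).summable_iff.mpr (summable_wE L p)
    refine this.congr ?_
    intro l; simp
  have h2 : Summable fun l : L.lattice => wG p l - 1 := by
    refine h1.congr_cofinite ?_
    filter_upwards [cofinite_ne L 0, cofinite_ne L (-p)] with l a b
    simp [wG, a, b]
  refine ⟨∏' l : L.lattice, wG p l, ?_, (multipliable_of_sub_one h2).hasProd⟩
  have := tprod_one_add_ne_zero_of_summable (f := fun l : L.lattice => wG p l - 1)
    (by intro l; simpa using wG_ne_zero p l hp) h2.norm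
  simpa using this

lemma cube_ineq {x y : ℝ} (hx : 0 ≤ x) (hy : 0 ≤ y) : x * y ^ 2 ≤ x ^ 3 + y ^ 3 := by
  rcases le_total x y with h | h
  · nlinarith [mul_le_mul_of_nonneg_right h (sq_nonneg y), pow_nonneg hx 3]
  · have : y ^ 2 ≤ x ^ 2 := by gcongr
    nlinarith [mul_le_mul_of_nonneg_left this hx, pow_nonneg hy 3]

lemma summable_cross (L : PeriodPair) (p : ℂ) :
    Summable fun l : L.lattice => 1 / ((l : ℂ) * ((l : ℂ) + p) ^ 2) := by
  refine Summable.of_norm_bounded ((summable_inv_cube L 0).add (summable_inv_cube L (-p))) ?_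
  intro l
  have := cube_ineq (inv_nonneg.mpr (norm_nonneg (l : ℂ))) (inv_nonneg.mpr (norm_nonneg ((l : ℂ) + p)))
  simpa [mul_comm] using this

lemma summable_cross' (L : PeriodPair) (p : ℂ) :
    Summable fun l : L.lattice => 1 / ((l : ℂ) ^ 2 * ((l : ℂ) + p)) := by
  refine Summable.of_norm_bounded ((summable_inv_cube L (-p)).add (summable_inv_cube L 0)) ?_
  intro l
  have := cube_ineq (inv_nonneg.mpr (norm_nonneg ((l : ℂ) + p))) (inv_nonneg.mpr (norm_nonneg (l : ℂ)))
  simpa [mul_comm] using this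

lemma wB_hasSum (L : PeriodPair) (p : L.lattice) :
    HasSum (fun l : L.lattice => wB p l) 0 := by
  have hs : Summable (fun l : L.lattice => wB p l) := by
    refine (((summable_cross L p).add (summable_cross' L p)).mul_left (-(p : ℂ) / 2)).congr_cofinite ?_
    filter_upwards [cofinite_ne L 0, cofinite_ne L (-p)] with l a b
    have h2 : (l : ℂ) + p ≠ 0 := fun h => b (eq_neg_of_add_eq_zero_left h)
    simp only [wB]
    field_simp
    ring
  have h1 := hs.hasSum
  have h2 := (Equiv.subLeft (-p)).hasSum_iff.mpr h1
  have h3 : HasSum (fun l : L.lattice => wB p l) (-∑' l : L.lattice, wB p l) := by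
    refine h2.neg.congr_fun ?_
    intro l
    have e : ((Equiv.subLeft (-p) l : L.lattice) : ℂ) = -(l + p) := by
      simp; ring
    have e' : -((l : ℂ) + p) + p = - l := by ring
    simp only [Function.comp, wB, e, e', even_two.neg_pow]
    ring
  have h4 := h1.unique h3
  have h5 : ∑' l : L.lattice, wB p l = 0 := by
    have : (2 : ℂ) * ∑' l : L.lattice, wB p l = 0 := by linear_combination h4
    simpa using this
  rwa [h5] at h1

lemma wA_hasSum (L : PeriodPair) (p : L.lattice) (hp : (p : ℂ) ≠ 0) :
    ∃ η : ℂ, HasSum (fun l : L.lattice => wA p l) η ∧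
      ∀ ξ, vconst L.ω₁ L.ω₂ ξ p = - ξ * η := by
  have h1 := (summable_cross L p).hasSum.mul_left (-(p : ℂ) ^ 2)
  have h2 := hasSum_ite_eq (0 : L.lattice) (2 / (p : ℂ))
  have h3 := hasSum_ite_eq (-p : L.lattice) (1 / (p : ℂ))
  have h4 := (h1.add h2).add h3
  refine ⟨_, h4.congr_fun ?_, ?_⟩
  · intro l
    by_cases c0 : l = 0
    · subst c0
      have : (0 : L.lattice) ≠ -p := by
        intro h
        apply hp
        have := congrArg (Subtype.val) h
        simpa using this.symm
      simp only [wA, if_true, this, if_false]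
      simp
      field_simp
      ring
    by_cases c1 : l = -p
    · subst c1
      simp only [wA, if_true, c0, if_false]
      simp
    have c0' : (l : ℂ) ≠ 0 := fun h => c0 (Subtype.ext h)
    have c1' : (l : ℂ) + p ≠ 0 := fun h => c1 (Subtype.ext (by simpa using eq_neg_of_add_eq_zero_left h))
    simp only [wA, c0, c1, if_false]
    field_simp
    ring
  · intro ξ
    unfold vconst
    have e1 := tsum_subtype {l : ℂ | l ∈ lat L.ω₁ L.ω₂ ∧ l ≠ 0 ∧ l ≠ -(p : ℂ)}
      (fun l => 1 / (l * (l + p) ^ 2))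
    have e2 := tsum_subtype (L.lattice : Set ℂ) (fun l => 1 / (l * (l + p) ^ 2))
    have e3 : (∑' l : {l : ℂ // l ∈ lat L.ω₁ L.ω₂ ∧ l ≠ 0 ∧ l ≠ -(p : ℂ)},
        1 / ((l : ℂ) * ((l : ℂ) + p) ^ 2)) =
        ∑' l : L.lattice, 1 / ((l : ℂ) * ((l : ℂ) + p) ^ 2) := by
      refine e1.trans (Eq.trans ?_ e2.symm)
      congr 1
      ext l
      by_cases h : l = 0
      · subst h
        simp [Set.indicator]
      by_cases h' : l = -p
      · subst h'
        simp [Set.indicator]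
      have : l ∈ {l : ℂ | l ∈ lat L.ω₁ L.ω₂ ∧ l ≠ 0 ∧ l ≠ -(p : ℂ)} ↔
          l ∈ (L.lattice : Set ℂ) := by
        simp only [Set.mem_ofPred_eq, SetLike.mem_coe, PeriodPair.mem_lattice, lat, h, h', ne_eq,
          not_false_eq_true, and_true, eq_comm]
      by_cases hl : l ∈ (L.lattice : Set ℂ)
      · rw [Set.indicator_of_mem hl, Set.indicator_of_mem (this.mpr hl)]
      · rw [Set.indicator_of_notMem hl, Set.indicator_of_notMem (fun h => hl (this.mp h))]
    rw [e3]
    field_simp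
    ring

lemma wsigma_shift (L : PeriodPair) (p : L.lattice) (hp : (p : ℂ) ≠ 0) :
    ∃ c η : ℂ, c ≠ 0 ∧ (∀ ξ, vconst L.ω₁ L.ω₂ ξ p = - ξ * η) ∧
      ∀ z, wsigma L.ω₁ L.ω₂ (z + p) = c * Complex.exp (η * z) * wsigma L.ω₁ L.ω₂ z := by
  obtain ⟨c, hc, hG⟩ := wG_hasProd L p hp
  obtain ⟨η, hA, hv⟩ := wA_hasSum L p hp
  refine ⟨c, η, hc, hv, fun z => ?_⟩
  have hE := ((hA.mul_right z).add ((wB_hasSum L p).mul_right (z ^ 2))).cexp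
  have h1 := (wF_hasProd L z).mul (hE.mul hG)
  have h2 := (Equiv.addRight p).hasProd_iff.mpr (wF_hasProd L (z + p))
  have h3 : HasProd (fun l : L.lattice => wF z l *
      ((Complex.exp ∘ fun l : L.lattice => wA p l * z + wB p l * z ^ 2) l * wG p l))
      (wsigma L.ω₁ L.ω₂ (z + p)) := by
    refine h2.congr_fun ?_
    intro l
    have := wF_shift p z l hp
    simp only [Function.comp, Equiv.coe_addRight, Submodule.coe_add]
    exact this.symm
  rw [h3.unique h1]
  simp
  ring

lemma key_shift (L : PeriodPair) (p : L.lattice) (hp : (p : ℂ) ≠ 0) (ξ₀ a : ℂ) (g : ℂ → ℂ)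
    (hg : ∀ z, g (z + p) = g z) (m : ℤ) (f : ℂ → ℂ)
    (hfdef : ∀ z, f z = Complex.exp (a * z) * g z *
      (wsigma L.ω₁ L.ω₂ z / wsigma L.ω₁ L.ω₂ (z - ξ₀))) (z : ℂ) :
    f (z + p) = Complex.exp (a * p - vconst L.ω₁ L.ω₂ ξ₀ p - 2 * m * Real.pi * Complex.I) * f z := by
  obtain ⟨c, η, hc, hv, hs⟩ := wsigma_shift L p hp
  have e1 : z + (p : ℂ) - ξ₀ = z - ξ₀ + p := by ring
  have e2 : Complex.exp (a * p - vconst L.ω₁ L.ω₂ ξ₀ p - 2 * m * Real.pi * Complex.I) =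
      Complex.exp (a * p) * Complex.exp (η * ξ₀) := by
    rw [← Complex.exp_add, Complex.exp_eq_exp_iff_exists_int]
    refine ⟨-m, ?_⟩
    rw [hv]
    push_cast
    ring
  have e3 : Complex.exp (η * z) = Complex.exp (η * ξ₀) * Complex.exp (η * (z - ξ₀)) := by
    rw [← Complex.exp_add]; congr 1; ring
  rw [hfdef, hfdef, hg, e1, hs, hs, e2, e3, mul_add, Complex.exp_add]
  have := Complex.exp_ne_zero (η * (z - ξ₀))
  by_cases h0 : wsigma L.ω₁ L.ω₂ (z - ξ₀) = 0
  · simp [h0]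
  field_simp

lemma phase_of_real (α w w' : ℂ) (hα : α.im = 0) (h : w' = Complex.exp α * w) :
    w' / (‖w'‖ : ℂ) = w / (‖w‖ : ℂ) := by
  have h1 : ((‖Complex.exp α‖ : ℝ) : ℂ) = Complex.exp α := by
    rw [Complex.norm_exp, Complex.ofReal_exp]
    congr 1
    apply Complex.ext <;> simp [hα]
  rw [h, norm_mul, Complex.ofReal_mul, h1, mul_div_mul_left _ _ (Complex.exp_ne_zero α)]

/-- Converse direction: if `Im(a pⱼ) = Im(vⱼ) + 2 mⱼ π` and `g` is elliptic (not identically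
zero), then `f(z) = e^{az} g(z) σ(z)/σ(z−ξ₀)` satisfies `f(z+pⱼ) = e^{αⱼ} f(z)` with real
`αⱼ = a pⱼ − vⱼ − 2 mⱼ π i`, hence has doubly periodic phase. -/
theorem converse_doubly_periodic_phase
    (p₁ p₂ : ℂ) (hω : (p₂ / p₁).im ≠ 0)
    (ξ₀ a : ℂ) (g : ℂ → ℂ) (hg : MeromorphicOn g Set.univ)
    (hg₁ : ∀ z, g (z + p₁) = g z) (hg₂ : ∀ z, g (z + p₂) = g z)
    (hgne : ¬ ∀ z, g z = 0)
    (m₁ m₂ : ℤ)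
    (ha₁ : (a * p₁).im = (vconst p₁ p₂ ξ₀ p₁).im + 2 * m₁ * Real.pi)
    (ha₂ : (a * p₂).im = (vconst p₁ p₂ ξ₀ p₂).im + 2 * m₂ * Real.pi)
    (f : ℂ → ℂ)
    (hfdef : ∀ z, f z = Complex.exp (a * z) * g z *
      (wsigma p₁ p₂ z / wsigma p₁ p₂ (z - ξ₀))) :
    (a * p₁ - vconst p₁ p₂ ξ₀ p₁ - 2 * m₁ * Real.pi * Complex.I).im = 0 ∧
    (a * p₂ - vconst p₁ p₂ ξ₀ p₂ - 2 * m₂ * Real.pi * Complex.I).im = 0 ∧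
    (∀ z, f (z + p₁) =
      Complex.exp (a * p₁ - vconst p₁ p₂ ξ₀ p₁ - 2 * m₁ * Real.pi * Complex.I) * f z) ∧
    (∀ z, f (z + p₂) =
      Complex.exp (a * p₂ - vconst p₁ p₂ ξ₀ p₂ - 2 * m₂ * Real.pi * Complex.I) * f z) ∧
    (∀ p ∈ ({p₁, p₂} : Set ℂ), ∀ z : ℂ, f z ≠ 0 → f (z + p) ≠ 0 →
      f (z + p) / (‖f (z + p)‖ : ℂ) = f z / (‖f z‖ : ℂ)) := by
  have hp₁ : p₁ ≠ 0 := by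
    rintro rfl; simp at hω
  have hp₂ : p₂ ≠ 0 := by
    rintro rfl; simp at hω
  have indep : LinearIndependent ℝ ![p₁, p₂] := by
    rw [LinearIndependent.pair_iff]
    intro s t h
    simp only [Complex.real_smul] at h
    have h1 : (s : ℂ) + t * (p₂ / p₁) = 0 := by
      field_simp
      linear_combination h
    have h2 := congrArg Complex.im h1
    simp only [Complex.add_im, Complex.ofReal_im, Complex.im_ofReal_mul, Complex.zero_im,
      zero_add, mul_eq_zero, hω, or_false] at h2
    subst h2
    simpa using h1
  let L : PeriodPair := ⟨p₁, p₂, indep⟩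
  have i1 : (a * p₁ - vconst p₁ p₂ ξ₀ p₁ - 2 * m₁ * Real.pi * Complex.I).im = 0 := by
    rw [Complex.sub_im, Complex.sub_im, ha₁]
    simp
  have i2 : (a * p₂ - vconst p₁ p₂ ξ₀ p₂ - 2 * m₂ * Real.pi * Complex.I).im = 0 := by
    rw [Complex.sub_im, Complex.sub_im, ha₂]
    simp
  have k1 := key_shift L ⟨p₁, L.ω₁_mem_lattice⟩ hp₁ ξ₀ a g hg₁ m₁ f hfdef
  have k2 := key_shift L ⟨p₂, L.ω₂_mem_lattice⟩ hp₂ ξ₀ a g hg₂ m₂ f hfdef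
  refine ⟨i1, i2, k1, k2, ?_⟩
  intro p hp z _ _
  rcases hp with rfl | hp
  · exact phase_of_real _ _ _ i1 (k1 z)
  · rw [Set.mem_singleton_iff] at hp
    subst hp
    exact phase_of_real _ _ _ i2 (k2 z)
end
end
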